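/- arXiv:2109.11774 — 2 statements merged into one kernel-verified Lean document; each statement's English description precedes it below -/
import Mathlib

section
/- Let μ and L be real numbers with 0 < μ ≤ L, set κ = L/μ, and let γ ≥ 1 be a real number with γ + 1 ≤ 8κ. Let B ≥ 0 and define step sizes η_t = 2/(μ(γ + t)). Let Δ : ℕ → ℝ be a nonnegative sequence satisfying, for all t ≥ 1, Δ_{t+1} ≤ (1 − η_t μ) Δ_t + η_t² B. Then for all t ≥ 1, (L/2) Δ_t ≤ (2κ/(γ + t)) · (B/μ + 2L Δ_1). -/
/-!
A step size `β / (γ + t)` turns the recursion into `Δ_{t+1} ≤ (1 - c/x) Δ_t + b/x²`, where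
`x = γ + t`, `c = βμ` and `b = β²B`. If `b ≤ (c - 1) v`, the bound `Δ_t ≤ v/x` propagates to
`Δ_{t+1} ≤ v/(x + 1)`: the right-hand side is at most `((x - c) v + (c - 1) v)/x² = (x - 1) v/x²`,
and `(x - 1)(x + 1) ≤ x²`. The smallest `v` that also accommodates the initial value is
`max (b/(c - 1)) ((γ + 1) Δ_1)`. With `β = 2/μ` this is at most `4B/μ² + 8κ Δ_1`.
-/

section OneSubDivRecursion

variable {𝕜 : Type*} [Field 𝕜] [LinearOrder 𝕜] [IsStrictOrderedRing 𝕜]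

lemma sub_one_mul_div_sq_le_div_add_one {x v : 𝕜} (hx : 0 < x) (hv : 0 ≤ v) :
    (x - 1) * v / x ^ 2 ≤ v / (x + 1) := by
  have hmul : (x - 1) * (x + 1) ≤ x ^ 2 := by linarith
  rw [div_le_div_iff₀ (by positivity) (by positivity)]
  calc (x - 1) * v * (x + 1) = v * ((x - 1) * (x + 1)) := by ring
    _ ≤ v * x ^ 2 := by gcongr

lemma one_sub_div_mul_add_div_sq_le_div_add_one {c x b v d : 𝕜} (hx : 0 < x) (hcx : c ≤ x)
    (hv : 0 ≤ v) (hb : b ≤ (c - 1) * v) (hd : d ≤ v / x) :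
    (1 - c / x) * d + b / x ^ 2 ≤ v / (x + 1) := by
  have hfactor : 0 ≤ 1 - c / x := sub_nonneg.mpr ((div_le_one hx).mpr hcx)
  calc (1 - c / x) * d + b / x ^ 2
      ≤ (1 - c / x) * (v / x) + (c - 1) * v / x ^ 2 := by gcongr
    _ = (x - 1) * v / x ^ 2 := by field_simp; ring
    _ ≤ v / (x + 1) := sub_one_mul_div_sq_le_div_add_one hx hv

lemma le_div_add_of_le_one_sub_div_mul_add_div_sq {c γ b v : 𝕜} {a : ℕ → 𝕜} {m : ℕ}
    (hγ : 0 < γ + m) (hcγ : c ≤ γ + m) (hv : 0 ≤ v) (hb : b ≤ (c - 1) * v)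
    (hinit : a m ≤ v / (γ + m))
    (hrec : ∀ t, m ≤ t → a (t + 1) ≤ (1 - c / (γ + t)) * a t + b / (γ + t) ^ 2) :
    ∀ t, m ≤ t → a t ≤ v / (γ + t) := by
  intro t ht
  induction t, ht using Nat.le_induction with
  | base => exact hinit
  | succ t ht ih =>
    have hmt : γ + m ≤ γ + t := by gcongr
    rw [Nat.cast_succ, ← add_assoc]
    exact (hrec t ht).trans <| one_sub_div_mul_add_div_sq_le_div_add_one
      (hγ.trans_le hmt) (hcγ.trans hmt) hv hb ih

theorem le_max_div_add_of_le_stepSize_recursion {μ β γ B : 𝕜} {Δ : ℕ → 𝕜} {m : ℕ}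
    (hβ : 1 < β * μ) (hβγ : β * μ ≤ γ + m) (hΔ : 0 ≤ Δ m)
    (hrec : ∀ t, m ≤ t →
      Δ (t + 1) ≤ (1 - β / (γ + t) * μ) * Δ t + (β / (γ + t)) ^ 2 * B) :
    ∀ t, m ≤ t →
      Δ t ≤ max (β ^ 2 * B / (β * μ - 1)) ((γ + m) * Δ m) / (γ + t) := by
  set v := max (β ^ 2 * B / (β * μ - 1)) ((γ + m) * Δ m)
  have hγ : 0 < γ + m := by linarith
  have hinit : (γ + m) * Δ m ≤ v := le_max_right _ _
  have hnoise : β ^ 2 * B ≤ (β * μ - 1) * v :=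
    (div_le_iff₀' (sub_pos.mpr hβ)).mp (le_max_left _ _)
  refine le_div_add_of_le_one_sub_div_mul_add_div_sq hγ hβγ
    ((mul_nonneg hγ.le hΔ).trans hinit) hnoise ((le_div_iff₀' hγ).mpr hinit) fun t ht ↦ ?_
  rw [mul_div_right_comm, mul_div_right_comm, ← div_pow]
  exact hrec t ht

theorem fedavg_full_participation_convergence_general
    {μ L κ γ B : 𝕜} (hμ : 0 < μ) (hκ : κ = L / μ) (hγ : 1 ≤ γ) (hγκ : γ + 1 ≤ 8 * κ)
    (hB : 0 ≤ B) {η : ℕ → 𝕜} (hη : ∀ t : ℕ, η t = 2 / (μ * (γ + t)))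
    {Δ : ℕ → 𝕜} (hΔ : 0 ≤ Δ 1)
    (hrec : ∀ t : ℕ, 1 ≤ t → Δ (t + 1) ≤ (1 - η t * μ) * Δ t + η t ^ 2 * B) :
    ∀ t : ℕ, 1 ≤ t →
      L / 2 * Δ t ≤ 2 * κ / (γ + t) * (B / μ + 2 * L * Δ 1) := by
  intro t ht
  have hβμ : 2 / μ * μ = 2 := div_mul_cancel₀ 2 hμ.ne'
  have hL : L = κ * μ := by rw [hκ, div_mul_cancel₀ L hμ.ne']
  have hκ_pos : 0 < κ := by linarith
  have hdecay : Δ t ≤ max ((2 / μ) ^ 2 * B) ((γ + 1) * Δ 1) / (γ + t) := by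
    have h := le_max_div_add_of_le_stepSize_recursion (β := 2 / μ) (μ := μ) (γ := γ) (m := 1)
      (by rw [hβμ]; norm_num) (by rw [hβμ, Nat.cast_one]; linarith) hΔ
      (by simpa only [hη, ← div_div] using hrec) t ht
    rwa [hβμ, Nat.cast_one, show (2 - 1 : 𝕜) = 1 by norm_num, div_one] at h
  have hmax : max ((2 / μ) ^ 2 * B) ((γ + 1) * Δ 1) ≤ (2 / μ) ^ 2 * B + 8 * κ * Δ 1 :=
    (max_le_add_of_nonneg (by positivity) (by positivity)).trans (by gcongr)
  calc L / 2 * Δ t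
      ≤ κ * μ / 2 * (((2 / μ) ^ 2 * B + 8 * κ * Δ 1) / (γ + t)) := by
        rw [hL]
        gcongr
        exact hdecay.trans (by gcongr)
    _ = 2 * κ / (γ + t) * (B / μ + 2 * L * Δ 1) := by rw [hL]; field_simp; ring

end OneSubDivRecursion

/-- Full-device-participation case of Theorem 1 in deterministic form: from the
one-step recursion `Δ_{t+1} ≤ (1 - η_t μ)Δ_t + η_t²B` with step sizes
`η_t = 2/(μ(γ + t))`, `κ = L/μ`, `1 ≤ γ` and `γ + 1 ≤ 8κ`, it follows that
`(L/2)Δ_t ≤ (2κ/(γ + t))(B/μ + 2LΔ_1)` for all `t ≥ 1`. -/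
theorem fedavg_full_participation_convergence
    (μ L : ℝ) (hμ : 0 < μ) (hμL : μ ≤ L)
    (κ : ℝ) (hκ : κ = L / μ)
    (γ : ℝ) (hγ : 1 ≤ γ) (hγκ : γ + 1 ≤ 8 * κ)
    (B : ℝ) (hB : 0 ≤ B)
    (η : ℕ → ℝ) (hη : ∀ t : ℕ, η t = 2 / (μ * (γ + (t : ℝ))))
    (Δ : ℕ → ℝ) (hΔ : ∀ t, 0 ≤ Δ t)
    (hrec : ∀ t : ℕ, 1 ≤ t → Δ (t + 1) ≤ (1 - η t * μ) * Δ t + (η t) ^ 2 * B) :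
    ∀ t : ℕ, 1 ≤ t →
      L / 2 * Δ t ≤ 2 * κ / (γ + (t : ℝ)) * (B / μ + 2 * L * Δ 1) :=
  fedavg_full_participation_convergence_general hμ hκ hγ hγκ hB hη (hΔ 1) hrec
end

section
/- Let μ and L be real numbers with 0 < μ ≤ L, set κ = L/μ, and let γ ≥ 1 be a real number with γ + 1 ≤ 8κ. Let B ≥ 0, D ≥ 0, and let C : ℕ → ℝ satisfy 0 ≤ C_t ≤ D for all t. Define step sizes η_t = 2/(μ(γ + t)). Let H be a real inner product space, let F : H → ℝ be differentiable with L-Lipschitz gradient, let w⋆ ∈ H be a global minimizer of F with F⋆ = F(w⋆), and let (w_t)_{t ≥ 1} be a sequence in H such that the squared distances Δ_t = ‖w_t − w⋆‖² satisfy, for all t ≥ 1, Δ_{t+1} ≤ (1 − η_t μ) Δ_t + η_t² (B + C_t). Then for every T ≥ 1, F(w_T) − F⋆ ≤ (2κ/(γ + T)) · ((B + D)/μ + 2L ‖w_1 − w⋆‖²). -/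
/-!
Since the derivative of `F` vanishes at the minimizer and is `L`-Lipschitz, integrating along the
segment from `w⋆` gives `F x - F w⋆ ≤ (L / 2) ‖x - w⋆‖²`, so it suffices to bound `Δ_T`. With
`s = γ + t` the recursion reads `Δ_{t+1} ≤ (1 - 2 / s) Δ_t + A / s²` for `A = 4 (B + D) / μ²`, and
`(s - 1) (s + 1) ≤ s²` propagates the bound `Δ_t ≤ v / (γ + t)` for every `v` that dominates both
`A` and `(γ + 1) Δ_1`. Since `γ + 1 ≤ 8 κ`, the choice `v = A + 8 κ Δ_1` is admissible.
-/

section GrowthFromCriticalPoint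

variable {E G : Type*} [NormedAddCommGroup E] [NormedSpace ℝ E]
  [NormedAddCommGroup G] [NormedSpace ℝ G]

theorem norm_image_sub_le_of_norm_hasFDerivWithinAt_le_mul {f : E → G} {f' : E → E →L[ℝ] G}
    {L : ℝ} {x y : E}
    (hf : ∀ z ∈ segment ℝ x y, HasFDerivWithinAt f (f' z) (segment ℝ x y) z)
    (bound : ∀ z ∈ segment ℝ x y, ‖f' z‖ ≤ L * ‖z - x‖) :
    ‖f y - f x‖ ≤ L / 2 * ‖y - x‖ ^ 2 := by
  let p : ℝ → E := AffineMap.lineMap x y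
  have hp : Set.MapsTo p (Set.Icc 0 1) (segment ℝ x y) := by
    rw [segment_eq_image_lineMap]
    exact Set.mapsTo_image _ _
  have hderiv : ∀ t ∈ Set.Icc (0 : ℝ) 1,
      HasDerivWithinAt (fun t => f (p t) - f x) (f' (p t) (y - x)) (Set.Icc 0 1) t := fun t ht =>
    ((hf _ (hp ht)).comp_hasDerivWithinAt t AffineMap.hasDerivWithinAt_lineMap hp).sub_const _
  have hquad : ∀ t : ℝ,
      HasDerivAt (fun t => L / 2 * ‖y - x‖ ^ 2 * t ^ 2) (L * t * ‖y - x‖ ^ 2) t := fun t =>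
    ((hasDerivAt_pow 2 t).const_mul _).congr_deriv (by push_cast; ring)
  have hspeed : ∀ t ∈ Set.Ico (0 : ℝ) 1, ‖f' (p t) (y - x)‖ ≤ L * t * ‖y - x‖ ^ 2 := by
    intro t ht
    have hdist : ‖p t - x‖ = t * ‖y - x‖ := by
      rw [← dist_eq_norm, dist_lineMap_left, Real.norm_of_nonneg ht.1, dist_eq_norm']
    calc ‖f' (p t) (y - x)‖ ≤ ‖f' (p t)‖ * ‖y - x‖ := (f' (p t)).le_opNorm _
      _ ≤ L * ‖p t - x‖ * ‖y - x‖ := by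
        gcongr
        exact bound _ (hp (Set.Ico_subset_Icc_self ht))
      _ = L * t * ‖y - x‖ ^ 2 := by rw [hdist]; ring
  have h := image_norm_le_of_norm_deriv_right_le_deriv_boundary
    (fun t ht => (hderiv t ht).continuousWithinAt)
    (fun t ht => (hderiv t (Set.Ico_subset_Icc_self ht)).mono_of_mem_nhdsWithin
      (Icc_mem_nhdsGE_of_mem ht))
    (by simp [p]) hquad hspeed (Set.right_mem_Icc.2 zero_le_one)
  simpa [p] using h

theorem norm_fderiv_le_of_isLocalMin {F : E → ℝ} {L : ℝ} {a : E} (hmin : IsLocalMin F a) {x : E}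
    (hlip : ‖fderiv ℝ F x - fderiv ℝ F a‖ ≤ L * ‖x - a‖) :
    ‖fderiv ℝ F x‖ ≤ L * ‖x - a‖ := by
  rwa [hmin.fderiv_eq_zero, sub_zero] at hlip

end GrowthFromCriticalPoint

section Recursion

theorem one_sub_div_mul_div_add_div_sq_le {A c s v : ℝ} (hs : 0 < s) (hv : 0 ≤ v)
    (hA : A ≤ (c - 1) * v) :
    (1 - c / s) * (v / s) + A / s ^ 2 ≤ v / (s + 1) :=
  calc (1 - c / s) * (v / s) + A / s ^ 2 ≤ (1 - c / s) * (v / s) + (c - 1) * v / s ^ 2 := by gcongr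
    _ = v * (s - 1) / s ^ 2 := by field_simp; ring
    _ ≤ v / (s + 1) := by
      rw [div_le_div_iff₀ (by positivity) (by positivity)]
      calc v * (s - 1) * (s + 1) = v * (s ^ 2 - 1) := by ring
        _ ≤ v * s ^ 2 := by gcongr; linarith

variable {c γ v : ℝ} {t₀ : ℕ} {Δ : ℕ → ℝ}

theorem le_div_of_le_one_sub_div_mul_add {A : ℝ} (hc : 0 < c) (hγ : c ≤ γ + t₀)
    (hrec : ∀ t, t₀ ≤ t → Δ (t + 1) ≤ (1 - c / (γ + t)) * Δ t + A / (γ + t) ^ 2)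
    (hv : 0 ≤ v) (hA : A ≤ (c - 1) * v) (hinit : Δ t₀ ≤ v / (γ + t₀)) {T : ℕ} (hT : t₀ ≤ T) :
    Δ T ≤ v / (γ + T) := by
  induction T, hT using Nat.le_induction with
  | base => exact hinit
  | succ t ht ih =>
    have hcs : c ≤ γ + t := hγ.trans (by gcongr)
    have hs : 0 < γ + t := hc.trans_le hcs
    have hcontr : 0 ≤ 1 - c / (γ + t) := sub_nonneg.2 ((div_le_one hs).2 hcs)
    calc Δ (t + 1) ≤ (1 - c / (γ + t)) * Δ t + A / (γ + t) ^ 2 := hrec t ht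
      _ ≤ (1 - c / (γ + t)) * (v / (γ + t)) + A / (γ + t) ^ 2 := by gcongr
      _ ≤ v / (γ + t + 1) := one_sub_div_mul_div_add_div_sq_le hs hv hA
      _ = v / (γ + (t + 1 : ℕ)) := by rw [Nat.cast_succ, add_assoc]

theorem le_div_of_le_one_sub_stepSize_mul_add {μ N : ℝ} {η e : ℕ → ℝ} (hμ : μ ≠ 0) (hc : 0 < c)
    (hγ : c ≤ γ + t₀) (hη : ∀ t : ℕ, η t = c / (μ * (γ + t))) (he : ∀ t, t₀ ≤ t → e t ≤ N)
    (hrec : ∀ t, t₀ ≤ t → Δ (t + 1) ≤ (1 - η t * μ) * Δ t + η t ^ 2 * e t)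
    (hv : 0 ≤ v) (hN : c ^ 2 * N / μ ^ 2 ≤ (c - 1) * v) (hinit : Δ t₀ ≤ v / (γ + t₀))
    {T : ℕ} (hT : t₀ ≤ T) :
    Δ T ≤ v / (γ + T) := by
  refine le_div_of_le_one_sub_div_mul_add hc hγ (fun t ht => ?_) hv hN hinit hT
  have hs : 0 < γ + t := hc.trans_le (hγ.trans (by gcongr))
  calc Δ (t + 1) ≤ (1 - η t * μ) * Δ t + η t ^ 2 * e t := hrec t ht
    _ ≤ (1 - η t * μ) * Δ t + η t ^ 2 * N := by gcongr; exact he t ht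
    _ = (1 - c / (γ + t)) * Δ t + c ^ 2 * N / μ ^ 2 / (γ + t) ^ 2 := by
      rw [hη]
      field_simp

end Recursion

theorem fedavg_wireless_convergence_general
    {H : Type*} [NormedAddCommGroup H] [NormedSpace ℝ H]
    (μ L : ℝ) (hμ : 0 < μ)
    (κ : ℝ) (hκ : κ = L / μ)
    (γ : ℝ) (hγ : 1 ≤ γ) (hγκ : γ + 1 ≤ 8 * κ)
    (B D : ℝ) (hBD : 0 ≤ B + D)
    (C : ℕ → ℝ) (hCD : ∀ t, C t ≤ D)
    (η : ℕ → ℝ) (hη : ∀ t : ℕ, η t = 2 / (μ * (γ + (t : ℝ))))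
    (F : H → ℝ) (hF : Differentiable ℝ F)
    (wstar : H) (hgrowth : ∀ x : H, ‖fderiv ℝ F x‖ ≤ L * ‖x - wstar‖)
    (Fstar : ℝ) (hFstar : Fstar = F wstar)
    (w : ℕ → H)
    (Δ : ℕ → ℝ) (hΔ : ∀ t, Δ t = ‖w t - wstar‖ ^ 2)
    (hrec : ∀ t : ℕ, 1 ≤ t →
      Δ (t + 1) ≤ (1 - η t * μ) * Δ t + (η t) ^ 2 * (B + C t)) :
    ∀ T : ℕ, 1 ≤ T →
      F (w T) - Fstar ≤
        2 * κ / (γ + (T : ℝ)) * ((B + D) / μ + 2 * L * ‖w 1 - wstar‖ ^ 2) := by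
  intro T hT
  have hκ0 : 0 < κ := by linarith
  have hL : L = κ * μ := by rw [hκ, div_mul_cancel₀ L hμ.ne']
  have hL0 : 0 < L := hL ▸ mul_pos hκ0 hμ
  have hΔ0 : 0 ≤ Δ 1 := hΔ 1 ▸ sq_nonneg _
  set v := 2 ^ 2 * (B + D) / μ ^ 2 + 8 * κ * Δ 1 with hv
  have hnoise : 2 ^ 2 * (B + D) / μ ^ 2 ≤ (2 - 1) * v := by
    rw [hv, show (2 : ℝ) - 1 = 1 by norm_num, one_mul]
    exact le_add_of_nonneg_right (by positivity)
  have hinit : Δ 1 ≤ v / (γ + (1 : ℕ)) := by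
    rw [Nat.cast_one, le_div_iff₀ (by linarith), mul_comm]
    exact (mul_le_mul_of_nonneg_right hγκ hΔ0).trans (le_add_of_nonneg_left (by positivity))
  have hdist : Δ T ≤ v / (γ + T) :=
    le_div_of_le_one_sub_stepSize_mul_add hμ.ne' two_pos (by push_cast; linarith) hη
      (fun t _ => add_le_add_right (hCD t) B) hrec (by positivity) hnoise hinit hT
  calc F (w T) - Fstar ≤ ‖F (w T) - F wstar‖ := hFstar ▸ Real.le_norm_self _
    _ ≤ L / 2 * Δ T := hΔ T ▸ norm_image_sub_le_of_norm_hasFDerivWithinAt_le_mul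
      (fun z _ => (hF z).hasFDerivAt.hasFDerivWithinAt) fun z _ => hgrowth z
    _ ≤ L / 2 * (v / (γ + T)) := by gcongr
    _ = 2 * κ / (γ + T) * ((B + D) / μ + 2 * L * ‖w 1 - wstar‖ ^ 2) := by
      rw [← hΔ, hv, hL]
      field_simp
      ring

/-- Theorem 1 of the paper (convergence of FedAvg in wireless environments) in
deterministic form: taking as hypothesis the conclusion of Lemma 1, with
`Δ_t = ‖w_t - w⋆‖²` satisfying `Δ_{t+1} ≤ (1 - η_t μ)Δ_t + η_t²(B + C_t)`,
`0 ≤ C_t ≤ D`, step sizes `η_t = 2/(μ(γ + t))`, `κ = L/μ`, and `F`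
differentiable with `L`-Lipschitz derivative minimized at `w⋆`, one has
`F(w_T) - F⋆ ≤ (2κ/(γ + T))((B + D)/μ + 2L‖w_1 - w⋆‖²)` for all `T ≥ 1`. -/
theorem fedavg_wireless_convergence
    {H : Type*} [NormedAddCommGroup H] [InnerProductSpace ℝ H]
    (μ L : ℝ) (hμ : 0 < μ) (hμL : μ ≤ L)
    (κ : ℝ) (hκ : κ = L / μ)
    (γ : ℝ) (hγ : 1 ≤ γ) (hγκ : γ + 1 ≤ 8 * κ)
    (B D : ℝ) (hB : 0 ≤ B) (hD : 0 ≤ D)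
    (C : ℕ → ℝ) (hC0 : ∀ t, 0 ≤ C t) (hCD : ∀ t, C t ≤ D)
    (η : ℕ → ℝ) (hη : ∀ t : ℕ, η t = 2 / (μ * (γ + (t : ℝ))))
    (F : H → ℝ) (hF : Differentiable ℝ F)
    (hlip : ∀ x y : H, ‖fderiv ℝ F x - fderiv ℝ F y‖ ≤ L * ‖x - y‖)
    (wstar : H) (hmin : ∀ v : H, F wstar ≤ F v)
    (Fstar : ℝ) (hFstar : Fstar = F wstar)
    (w : ℕ → H)
    (Δ : ℕ → ℝ) (hΔ : ∀ t, Δ t = ‖w t - wstar‖ ^ 2)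
    (hrec : ∀ t : ℕ, 1 ≤ t →
      Δ (t + 1) ≤ (1 - η t * μ) * Δ t + (η t) ^ 2 * (B + C t)) :
    ∀ T : ℕ, 1 ≤ T →
      F (w T) - Fstar ≤
        2 * κ / (γ + (T : ℝ)) * ((B + D) / μ + 2 * L * ‖w 1 - wstar‖ ^ 2) :=
  fedavg_wireless_convergence_general μ L hμ κ hκ γ hγ hγκ B D (add_nonneg hB hD) C hCD η hη F hF
    wstar (fun x => norm_fderiv_le_of_isLocalMin (.of_forall hmin) (hlip x wstar))
    Fstar hFstar w Δ hΔ hrec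
end
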